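/- arXiv:1501.07767 — 2 statements merged into one kernel-verified Lean document; each statement's English description precedes it below -/
import Mathlib

section
/- There exist ρ* > 0, a constant K > 0, and functions e₁(x,ρ), e₂(x,ρ) defined for x ∈ [0,T] and ρ in the closed upper half-plane with |ρ| ≥ ρ*, such that: (i) for each such ρ, e₁(·,ρ) and e₂(·,ρ) are solutions of −y''+q y = ρ² y on [0,T] forming a fundamental system; (ii) for ν=0,1, the functions e₁^{(ν)}(x,·) and e₂^{(ν)}(x,·) are continuous in ρ on {Im ρ ≥ 0, |ρ| ≥ ρ*} and, for each fixed x, analytic in ρ on {Im ρ > 0, |ρ| > ρ*}; (iii) uniformly in x ∈ [0,T], |e₁^{(ν)}(x,ρ) − (iρ)^ν e^{iρx}| ≤ K|ρ|^{ν−1} e^{−τ x} and |e₂^{(ν)}(x,ρ) − (−iρ)^ν e^{−iρx}| ≤ K|ρ|^{ν−1} e^{τ x} for ν = 0,1, where τ = Im ρ. -/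
/-!
Put `k = iρ`, so that `Re k ≤ 0` and the equation reads `-y'' + q y = -k² y`. With `y = e^{-kx} w`,
variation of constants turns it into `w = 1 + (2k)⁻¹ (S_{2k} - S₀) w` on the Banach algebra
`C[0,T]`, where `S_c` solves `u' = c u + q f`, `u(0) = 0`, that is,
`(S_c f)(x) = ∫₀ˣ e^{c(x-t)} q(t) f(t) dt`. As `‖S_c‖ ≤ ‖q‖₁` for `Re c ≤ 0`, the operator on the
right has norm at most `1/2` once `|k| ≥ 2‖q‖₁`, and `w` is obtained by inverting `1 - A`, where
`A = (2k)⁻¹ (S_{2k} - S₀)`. Since `S_c` is entire in `c` and inversion is analytic on the units of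
a Banach algebra, `w` is analytic in `k`, even across the real line in `ρ`. The asymptotics are
read off the equation for `w` and off `y' = e^{-kx} (-k + ½ (S_{2k} + S₀) w)`.

This gives the solution asymptotic to `e^{-iρx}`. If `f` is that solution for the reflected
potential `q(T - ·)`, then `e^{iρT} f(T - x)` is the solution asymptotic to `e^{iρx}`. For large
`|ρ|` all relative errors are at most `1/4`, so the Wronskian differs from `-2iρ` by at most
`(9/8)|ρ|`.
-/

open MeasureTheory Set Complex

/-- `SLSol q T lam y y'` means: on `[0,T]`, `y` and `y'` are absolutely continuous,
`y'` is the derivative of `y`, and `-y'' + q y = lam y` holds a.e., expressed in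
the equivalent integral (Carathéodory) form. -/
def SLSol (q : ℝ → ℝ) (T : ℝ) (lam : ℂ) (y y' : ℝ → ℂ) : Prop :=
  (∀ x ∈ Icc (0:ℝ) T, y x = y 0 + ∫ t in (0:ℝ)..x, y' t) ∧
  (∀ x ∈ Icc (0:ℝ) T, y' x = y' 0 + ∫ t in (0:ℝ)..x, ((q t : ℂ) - lam) * y t)

/-! ### Indefinite integrals -/

section ACDeriv

variable {E : Type*} [NormedAddCommGroup E] [NormedSpace ℝ E] {u v p r : ℝ → E} {a b : ℝ}

/-- `u` is absolutely continuous on the interval between `a` and `b` with a.e. derivative `p`,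
encoded as: `u` is an indefinite integral of the integrable function `p`. -/
structure HasACDerivOn (u p : ℝ → E) (a b : ℝ) : Prop where
  intervalIntegrable : IntervalIntegrable p volume a b
  eq_add_integral : ∀ x ∈ uIcc a b, u x = u a + ∫ t in a..x, p t

lemma absolutelyContinuousOnInterval_of_dist_le {X Y : Type*} [PseudoMetricSpace X]
    [PseudoMetricSpace Y] {f : ℝ → X} {g : ℝ → Y} (hg : AbsolutelyContinuousOnInterval g a b)
    (hfg : ∀ x ∈ uIcc a b, ∀ y ∈ uIcc a b, dist (f x) (f y) ≤ dist (g x) (g y)) :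
    AbsolutelyContinuousOnInterval f a b := by
  rw [absolutelyContinuousOnInterval_iff] at hg ⊢
  intro ε hε
  obtain ⟨δ, hδ, hsum⟩ := hg ε hε
  refine ⟨δ, hδ, fun I hI hlen => (Finset.sum_le_sum fun i hi => ?_).trans_lt (hsum I hI hlen)⟩
  exact hfg _ (hI.1 i hi).1 _ (hI.1 i hi).2

namespace HasACDerivOn

lemma of_hasDerivAt [CompleteSpace E] (hu : ∀ x, HasDerivAt u (p x) x) (hp : Continuous p) :
    HasACDerivOn u p a b where
  intervalIntegrable := hp.intervalIntegrable a b
  eq_add_integral x _ := by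
    rw [intervalIntegral.integral_eq_sub_of_hasDerivAt (fun t _ => hu t)
      (hp.intervalIntegrable a x), add_sub_cancel]

lemma integral (hp : IntervalIntegrable p volume a b) :
    HasACDerivOn (fun x => ∫ t in a..x, p t) p a b where
  intervalIntegrable := hp
  eq_add_integral x _ := by rw [intervalIntegral.integral_same, zero_add]

lemma congr (h : HasACDerivOn u p a b) (hu : EqOn v u (uIcc a b)) (hp : EqOn r p (uIcc a b)) :
    HasACDerivOn v r a b where
  intervalIntegrable := h.intervalIntegrable.congr (hp.symm.mono uIoc_subset_uIcc)
  eq_add_integral x hx := by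
    rw [hu hx, hu left_mem_uIcc, h.eq_add_integral x hx]
    congr 1
    exact intervalIntegral.integral_congr fun t ht => (hp (uIcc_subset_uIcc_left hx ht)).symm

lemma intervalIntegrable_left (h : HasACDerivOn u p a b) {x : ℝ} (hx : x ∈ uIcc a b) :
    IntervalIntegrable p volume a x :=
  h.intervalIntegrable.mono_set (uIcc_subset_uIcc_left hx)

lemma add (hu : HasACDerivOn u p a b) (hv : HasACDerivOn v r a b) :
    HasACDerivOn (fun x => u x + v x) (fun x => p x + r x) a b where
  intervalIntegrable := hu.intervalIntegrable.add hv.intervalIntegrable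
  eq_add_integral x hx := by
    rw [intervalIntegral.integral_add (hu.intervalIntegrable_left hx)
      (hv.intervalIntegrable_left hx), hu.eq_add_integral x hx, hv.eq_add_integral x hx]
    abel

lemma const_add (h : HasACDerivOn u p a b) (c : E) : HasACDerivOn (fun x => c + u x) p a b where
  intervalIntegrable := h.intervalIntegrable
  eq_add_integral x hx := by rw [h.eq_add_integral x hx, add_assoc]

lemma comp_const_sub (h : HasACDerivOn u p a b) (d : ℝ) :
    HasACDerivOn (fun x => u (d - x)) (fun x => -p (d - x)) (d - b) (d - a) where
  intervalIntegrable := (h.intervalIntegrable.comp_sub_left d).symm.neg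
  eq_add_integral x hx := by
    have hdx : d - x ∈ uIcc a b := by
      rwa [← mem_preimage (f := fun x => d - x), preimage_const_sub_uIcc, uIcc_comm]
    have hb := h.eq_add_integral b right_mem_uIcc
    rw [intervalIntegral.integral_neg, intervalIntegral.integral_comp_sub_left, sub_sub_cancel,
      h.eq_add_integral _ hdx, hb,
      ← intervalIntegral.integral_interval_sub_left h.intervalIntegrable
        (h.intervalIntegrable_left hdx)]
    abel

lemma absolutelyContinuousOnInterval (h : HasACDerivOn u p a b) :
    AbsolutelyContinuousOnInterval u a b := by
  refine absolutelyContinuousOnInterval_of_dist_le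
    (h.intervalIntegrable.norm.absolutelyContinuousOnInterval_intervalIntegral left_mem_uIcc)
    fun x hx y hy => ?_
  have hp {z : ℝ} (hz : z ∈ uIcc a b) : IntervalIntegrable p volume a z :=
    h.intervalIntegrable_left hz
  rw [dist_eq_norm, dist_eq_norm, h.eq_add_integral x hx, h.eq_add_integral y hy,
    add_sub_add_left_eq_sub, intervalIntegral.integral_interval_sub_left (hp hx) (hp hy),
    intervalIntegral.integral_interval_sub_left (hp hx).norm (hp hy).norm]
  exact intervalIntegral.norm_integral_le_abs_integral_norm

lemma continuousOn (h : HasACDerivOn u p a b) : ContinuousOn u (uIcc a b) :=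
  h.absolutelyContinuousOnInterval.continuousOn

lemma ae_hasDerivAt [CompleteSpace E] (h : HasACDerivOn u p a b) :
    ∀ᵐ x, x ∈ uIcc a b → HasDerivAt u (p x) x := by
  filter_upwards [h.intervalIntegrable.ae_hasDerivAt_integral, Measure.ae_ne volume a,
    Measure.ae_ne volume b] with x hderiv hxa hxb hx
  have hnhds : uIcc a b ∈ nhds x := by
    rw [uIcc] at hx ⊢
    refine Icc_mem_nhds (lt_of_le_of_ne hx.1 ?_) (lt_of_le_of_ne hx.2 ?_) <;> grind
  refine ((hderiv hx a left_mem_uIcc).const_add (u a)).congr_of_eventuallyEq ?_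
  filter_upwards [hnhds] with y hy using h.eq_add_integral y hy

lemma of_ae_hasDerivAt [CompleteSpace E] (hu : AbsolutelyContinuousOnInterval u a b)
    (hp : IntervalIntegrable p volume a b)
    (hderiv : ∀ᵐ x, x ∈ uIcc a b → HasDerivAt u (p x) x) : HasACDerivOn u p a b where
  intervalIntegrable := hp
  eq_add_integral x hx := by
    obtain ⟨C, hC⟩ := (hu.fun_sub
      (integral hp).absolutelyContinuousOnInterval).const_of_ae_hasDerivAt_zero <| by
        filter_upwards [hderiv, (integral hp).ae_hasDerivAt] with y hy hint hmem
        simpa only [sub_self] using (hy hmem).fun_sub (hint hmem)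
    have hCa := hC a left_mem_uIcc
    rw [intervalIntegral.integral_same, sub_zero] at hCa
    rw [hCa, ← hC x hx, sub_add_cancel]

lemma mul {A : Type*} [NormedRing A] [NormMulClass A] [NormedAlgebra ℝ A] [CompleteSpace A]
    {u v p r : ℝ → A} (hu : HasACDerivOn u p a b) (hv : HasACDerivOn v r a b) :
    HasACDerivOn (fun x => u x * v x) (fun x => p x * v x + u x * r x) a b :=
  of_ae_hasDerivAt
    (hu.absolutelyContinuousOnInterval.fun_smul hv.absolutelyContinuousOnInterval)
    ((hu.intervalIntegrable.mul_continuousOn hv.continuousOn).add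
      (hv.intervalIntegrable.continuousOn_mul hu.continuousOn)) <| by
    filter_upwards [hu.ae_hasDerivAt, hv.ae_hasDerivAt] with x hux hvx hx
    exact (hux hx).fun_mul (hvx hx)

lemma const_mul {𝕜 : Type*} [RCLike 𝕜] {u p : ℝ → 𝕜} (h : HasACDerivOn u p a b) (c : 𝕜) :
    HasACDerivOn (fun x => c * u x) (fun x => c * p x) a b where
  intervalIntegrable := h.intervalIntegrable.const_mul c
  eq_add_integral x hx := by
    rw [intervalIntegral.integral_const_mul, h.eq_add_integral x hx, mul_add]

end HasACDerivOn

lemma hasDerivAt_cexp_mul (c : ℂ) (x : ℝ) :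
    HasDerivAt (fun x : ℝ => cexp (c * x)) (c * cexp (c * x)) x := by
  have h : HasDerivAt (fun x : ℝ => c * (x : ℂ)) c x := by
    simpa only [mul_one, ofReal_one, id] using (hasDerivAt_id x).ofReal_comp.const_mul c
  simpa only [mul_comm] using h.cexp

lemma hasACDerivOn_cexp_mul (c : ℂ) :
    HasACDerivOn (fun x : ℝ => cexp (c * x)) (fun x => c * cexp (c * x)) a b :=
  .of_hasDerivAt (hasDerivAt_cexp_mul c) (by fun_prop)

end ACDeriv

section SturmLiouville

variable {q : ℝ → ℂ} {lam : ℂ} {y y' : ℝ → ℂ} {a b : ℝ}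

/-- `y` solves `-y'' + q y = lam y` a.e. between `a` and `b`, with `y` and its derivative `y'`
absolutely continuous. -/
structure IsSturmLiouvilleSolution (q : ℝ → ℂ) (lam : ℂ) (y y' : ℝ → ℂ) (a b : ℝ) : Prop where
  hasACDerivOn : HasACDerivOn y y' a b
  hasACDerivOn_deriv : HasACDerivOn y' (fun x => (q x - lam) * y x) a b

namespace IsSturmLiouvilleSolution

lemma slSol {q : ℝ → ℝ} {T : ℝ} (hT : 0 ≤ T)
    (h : IsSturmLiouvilleSolution (fun x => q x) lam y y' 0 T) : SLSol q T lam y y' := by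
  rw [SLSol, ← uIcc_of_le hT]
  exact ⟨h.hasACDerivOn.eq_add_integral, h.hasACDerivOn_deriv.eq_add_integral⟩

lemma const_mul (h : IsSturmLiouvilleSolution q lam y y' a b) (c : ℂ) :
    IsSturmLiouvilleSolution q lam (fun x => c * y x) (fun x => c * y' x) a b where
  hasACDerivOn := h.hasACDerivOn.const_mul c
  hasACDerivOn_deriv :=
    (h.hasACDerivOn_deriv.const_mul c).congr (fun _ _ => rfl) fun _ _ => mul_left_comm _ _ _

lemma comp_const_sub (h : IsSturmLiouvilleSolution q lam y y' a b) (d : ℝ) :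
    IsSturmLiouvilleSolution (fun x => q (d - x)) lam (fun x => y (d - x)) (fun x => -y' (d - x))
      (d - b) (d - a) where
  hasACDerivOn := h.hasACDerivOn.comp_const_sub d
  hasACDerivOn_deriv :=
    ((h.hasACDerivOn_deriv.comp_const_sub d).const_mul (-1)).congr
      (fun _ _ => (neg_one_mul _).symm) fun _ _ => by
        simp only [neg_mul, one_mul, neg_neg]

end IsSturmLiouvilleSolution

/-- Variation of constants: `P` and `M` carry the growing and the constant mode of
`w'' - 2 k w' = q w`, the equation for `w = e^{kx} y`. -/
lemma isSturmLiouvilleSolution_exp_neg_mul {k : ℂ} (hk : k ≠ 0) {w P M : ℝ → ℂ}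
    (hP : HasACDerivOn P (fun x => 2 * k * P x + q x * w x) a b)
    (hM : HasACDerivOn M (fun x => q x * w x) a b)
    (hw : ∀ x ∈ uIcc a b, w x = 1 + (2 * k)⁻¹ * (P x - M x)) :
    IsSturmLiouvilleSolution q (-k ^ 2) (fun x => cexp (-k * x) * w x)
      (fun x => cexp (-k * x) * (-k + 2⁻¹ * (P x + M x))) a b := by
  have hw' : HasACDerivOn w P a b :=
    (((hP.const_mul (2 * k)⁻¹).add (hM.const_mul (-(2 * k)⁻¹))).const_add 1).congr
      (fun x hx => by rw [hw x hx]; ring) (fun x _ => by field_simp; ring)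
  constructor
  · refine ((hasACDerivOn_cexp_mul (-k)).mul hw').congr (fun _ _ => rfl) fun x hx => ?_
    simp only [hw x hx]
    field_simp
    ring
  · refine ((hasACDerivOn_cexp_mul (-k)).mul (((hP.add hM).const_mul 2⁻¹).const_add (-k))).congr
      (fun _ _ => rfl) fun x hx => ?_
    simp only [hw x hx]
    field_simp
    ring

end SturmLiouville

/-! ### Duhamel operators on `C[0,T]` -/

section VolterraOperators

lemma norm_integral_mul_le {q g : ℝ → ℂ} {a b x C : ℝ} (hq : IntervalIntegrable q volume a b)
    (hx : x ∈ Icc a b) (hC : 0 ≤ C) (hg : ∀ t ∈ Ioc a x, ‖g t‖ ≤ C) :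
    ‖∫ t in a..x, q t * g t‖ ≤ (∫ t in a..b, ‖q t‖) * C := by
  have hab : a ≤ b := hx.1.trans hx.2
  have hqx : IntervalIntegrable (fun t => ‖q t‖) volume a x :=
    hq.norm.mono_set (uIcc_subset_uIcc_left (by rwa [uIcc_of_le hab]))
  calc ‖∫ t in a..x, q t * g t‖ ≤ ∫ t in a..x, ‖q t‖ * C := by
        refine intervalIntegral.norm_integral_le_of_norm_le hx.1 (.of_forall fun t ht => ?_)
          (hqx.mul_const C)
        rw [norm_mul]
        exact mul_le_mul_of_nonneg_left (hg t ht) (norm_nonneg _)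
    _ = (∫ t in a..x, ‖q t‖) * C := intervalIntegral.integral_mul_const ..
    _ ≤ (∫ t in a..b, ‖q t‖) * C := by
        refine mul_le_mul_of_nonneg_right ?_ hC
        exact intervalIntegral.integral_mono_interval le_rfl hx.1 hx.2
          (.of_forall fun t => norm_nonneg (q t)) hq.norm

lemma differentiable_clm_mul {𝕜 E A : Type*} [NontriviallyNormedField 𝕜] [NormedAddCommGroup E]
    [NormedSpace 𝕜 E] [NormedRing A] [NormedAlgebra 𝕜 A] {f : E → A} (hf : Differentiable 𝕜 f) :
    Differentiable 𝕜 fun x => ContinuousLinearMap.mul 𝕜 A (f x) :=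
  (ContinuousLinearMap.differentiable _).comp hf

/-- The function `x ↦ exp (c x)` as an element of the Banach algebra of continuous functions on
`[0, T]`. -/
noncomputable def expMap (T : ℝ) (c : ℂ) : C(Icc (0 : ℝ) T, ℂ) where
  toFun x := cexp (c * (x : ℝ))

lemma differentiable_expMap (T : ℝ) : Differentiable ℂ (expMap T) := by
  let coord : C(Icc (0 : ℝ) T, ℂ) := ⟨fun x => ((x : ℝ) : ℂ), by fun_prop⟩
  have heq : expMap T = fun c => NormedSpace.exp (c • coord) := by
    ext c x
    have hexp := NormedSpace.map_exp (ContinuousMap.evalAlgHom ℂ ℂ x)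
      (continuous_eval_const x) (c • coord)
    rw [← Complex.exp_eq_exp_ℂ] at hexp
    exact hexp.symm
  rw [heq]
  exact fun c => (hasDerivAt_exp_smul_const coord c).differentiableAt

variable {q : ℝ → ℂ} {T : ℝ} (hT : 0 ≤ T) (hq : IntervalIntegrable q volume 0 T)

lemma hasACDerivOn_integral_mul_IccExtend (hq : IntervalIntegrable q volume 0 T)
    (f : C(Icc (0 : ℝ) T, ℂ)) :
    HasACDerivOn (fun x => ∫ t in (0 : ℝ)..x, q t * IccExtend hT f t)
      (fun x => q x * IccExtend hT f x) 0 T :=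
  .integral (hq.mul_continuousOn f.continuous.Icc_extend'.continuousOn)

/-- The operator `f ↦ (x ↦ ∫₀ˣ q f)` on the continuous functions on `[0, T]`. -/
noncomputable def weightedPrimitive : C(Icc (0 : ℝ) T, ℂ) →L[ℂ] C(Icc (0 : ℝ) T, ℂ) :=
  LinearMap.mkContinuous
    { toFun f :=
        { toFun x := ∫ t in (0 : ℝ)..x, q t * IccExtend hT f t
          continuous_toFun := by
            have h := (hasACDerivOn_integral_mul_IccExtend hT hq f).continuousOn
            rw [uIcc_of_le hT] at h
            exact h.domRestrict }
      map_add' f g := by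
        ext x
        have hx : (x : ℝ) ∈ uIcc 0 T := by rw [uIcc_of_le hT]; exact x.2
        have hint (f : C(Icc (0 : ℝ) T, ℂ)) :=
          (hasACDerivOn_integral_mul_IccExtend hT hq f).intervalIntegrable_left hx
        exact (intervalIntegral.integral_congr fun t _ => mul_add _ _ _).trans
          (intervalIntegral.integral_add (hint f) (hint g))
      map_smul' c f := by
        ext x
        exact (intervalIntegral.integral_congr fun t _ => mul_left_comm _ _ _).trans
          (intervalIntegral.integral_const_mul c _) }
    (∫ t in (0 : ℝ)..T, ‖q t‖) fun f => by
      refine (ContinuousMap.norm_le _ (mul_nonneg ?_ (norm_nonneg f))).2 fun x => ?_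
      · exact intervalIntegral.integral_nonneg hT fun t _ => norm_nonneg (q t)
      exact norm_integral_mul_le hq x.2 (norm_nonneg f) fun t _ => f.norm_coe_le_norm _

/-- The solution operator `f ↦ u` of `u' = c u + q f`, `u 0 = 0` on `[0, T]`. -/
noncomputable def duhamel (c : ℂ) : C(Icc (0 : ℝ) T, ℂ) →L[ℂ] C(Icc (0 : ℝ) T, ℂ) :=
  ContinuousLinearMap.mul ℂ _ (expMap T c) ∘L weightedPrimitive hT hq ∘L
    ContinuousLinearMap.mul ℂ _ (expMap T (-c))

lemma duhamel_apply (c : ℂ) (f : C(Icc (0 : ℝ) T, ℂ)) (x : Icc (0 : ℝ) T) :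
    duhamel hT hq c f x =
      cexp (c * (x : ℝ)) * ∫ t in (0 : ℝ)..x, q t * IccExtend hT (expMap T (-c) * f) t := rfl

lemma differentiable_duhamel : Differentiable ℂ (duhamel hT hq) := by
  have hexp := differentiable_expMap T
  exact (differentiable_clm_mul hexp).clm_comp ((differentiable_const _).clm_comp
    (differentiable_clm_mul (hexp.comp differentiable_id.neg)))

lemma norm_duhamel_le {c : ℂ} (hc : c.re ≤ 0) :
    ‖duhamel hT hq c‖ ≤ ∫ t in (0 : ℝ)..T, ‖q t‖ := by
  have hN : 0 ≤ ∫ t in (0 : ℝ)..T, ‖q t‖ :=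
    intervalIntegral.integral_nonneg hT fun t _ => norm_nonneg (q t)
  refine ContinuousLinearMap.opNorm_le_bound _ hN fun f =>
    (ContinuousMap.norm_le _ (by positivity)).2 fun x => ?_
  have hbound : ∀ t ∈ Ioc 0 (x : ℝ),
      ‖IccExtend hT (expMap T (-c) * f) t‖ ≤ Real.exp (-(c.re * x)) * ‖f‖ := by
    intro t ht
    rw [IccExtend_of_mem hT _ ⟨ht.1.le, ht.2.trans x.2.2⟩, ContinuousMap.mul_apply, norm_mul]
    gcongr
    · simp only [expMap, ContinuousMap.coe_mk, norm_exp, neg_mul, neg_re, re_mul_ofReal]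
      exact Real.exp_le_exp.2 (neg_le_neg (mul_le_mul_of_nonpos_left ht.2 hc))
    · exact f.norm_coe_le_norm _
  rw [duhamel_apply, norm_mul, norm_exp, re_mul_ofReal]
  refine (mul_le_mul_of_nonneg_left (norm_integral_mul_le hq x.2 (by positivity) hbound)
    (Real.exp_nonneg _)).trans_eq ?_
  rw [mul_left_comm, ← mul_assoc (Real.exp _), ← Real.exp_add, add_neg_cancel, Real.exp_zero,
    one_mul]

lemma hasACDerivOn_IccExtend_duhamel (c : ℂ) (f : C(Icc (0 : ℝ) T, ℂ)) :
    HasACDerivOn (IccExtend hT (duhamel hT hq c f))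
      (fun x => c * IccExtend hT (duhamel hT hq c f) x + q x * IccExtend hT f x) 0 T := by
  have hval {x : ℝ} (hx : x ∈ uIcc 0 T) : IccExtend hT (duhamel hT hq c f) x =
      cexp (c * x) * ∫ t in (0 : ℝ)..x, q t * IccExtend hT (expMap T (-c) * f) t := by
    rw [uIcc_of_le hT] at hx
    rw [IccExtend_of_mem hT _ hx, duhamel_apply]
  refine ((hasACDerivOn_cexp_mul c).mul (hasACDerivOn_integral_mul_IccExtend hT hq
    (expMap T (-c) * f))).congr (fun x hx => hval hx) fun x hx => ?_
  have hexp : cexp (c * x) * IccExtend hT (expMap T (-c) * f) x = IccExtend hT f x := by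
    rw [uIcc_of_le hT] at hx
    rw [IccExtend_of_mem hT _ hx, IccExtend_of_mem hT _ hx, ContinuousMap.mul_apply, ← mul_assoc]
    simp only [expMap, ContinuousMap.coe_mk, ← Complex.exp_add]
    rw [neg_mul, add_neg_cancel, Complex.exp_zero, one_mul]
  simp only [hval hx, ← hexp]
  ring

end VolterraOperators

section Profile

lemma ringInverse_one_sub_apply {𝕜 E : Type*} [NontriviallyNormedField 𝕜] [NormedAddCommGroup E]
    [NormedSpace 𝕜 E] [CompleteSpace E] {A : E →L[𝕜] E} (hA : ‖A‖ < 1) (v : E) :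
    Ring.inverse (1 - A) v = v + A (Ring.inverse (1 - A) v) := by
  have h := DFunLike.congr_fun
    (Ring.mul_inverse_cancel (1 - A) (isUnit_one_sub_of_norm_lt_one hA)) v
  exact sub_eq_iff_eq_add.1 h

lemma analyticAt_clm_apply {𝕜 D E F : Type*} [NontriviallyNormedField 𝕜] [NormedAddCommGroup D]
    [NormedSpace 𝕜 D] [NormedAddCommGroup E] [NormedSpace 𝕜 E] [NormedAddCommGroup F]
    [NormedSpace 𝕜 F] {A : D → E →L[𝕜] F} {u : D → E} {x : D} (hA : AnalyticAt 𝕜 A x)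
    (hu : AnalyticAt 𝕜 u x) : AnalyticAt 𝕜 (fun z => A z (u z)) x :=
  ((ContinuousLinearMap.id 𝕜 (E →L[𝕜] F)).analyticAt_bilinear (A x, u x)).comp₂ hA hu

variable {E : Type*} [NormedAddCommGroup E] [NormedSpace ℂ E] {S : ℂ → E →L[ℂ] E} {v : E} {k : ℂ}
  {N : ℝ}

/-- With `S` the Duhamel operators, the Volterra operator `A` such that `w = e^{kx} y` satisfies
`w = v + A w` when `-y'' + q y = -k² y`. -/
noncomputable def profileOperator (S : ℂ → E →L[ℂ] E) (k : ℂ) : E →L[ℂ] E :=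
  (2 * k)⁻¹ • (S (2 * k) - S 0)

/-- The solution `w` of `w = v + A w`, for `A` the profile operator: the factor `w` in the solution
`y = e^{-kx} w` of `-y'' + q y = -k² y`. -/
noncomputable def profile (S : ℂ → E →L[ℂ] E) (v : E) (k : ℂ) : E :=
  Ring.inverse (1 - profileOperator S k) v

/-- The factor `e^{kx} y'` of the derivative of `y = e^{-kx} w`. -/
noncomputable def derivProfile (S : ℂ → E →L[ℂ] E) (v : E) (k : ℂ) : E :=
  -(k • v) + (2 : ℂ)⁻¹ • (S (2 * k) + S 0) (profile S v k)

lemma norm_profileOperator_le (hS : ∀ c : ℂ, c.re ≤ 0 → ‖S c‖ ≤ N) (hk : k.re ≤ 0) :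
    ‖profileOperator S k‖ ≤ N / ‖k‖ := by
  have h2k : (2 * k).re ≤ 0 := by simpa using mul_nonpos_of_nonneg_of_nonpos zero_le_two hk
  calc ‖profileOperator S k‖ ≤ ‖(2 * k)⁻¹‖ * (N + N) := by
        rw [profileOperator, norm_smul]
        gcongr
        exact norm_sub_le_of_le (hS _ h2k) (hS 0 le_rfl)
    _ = N / ‖k‖ := by
        rw [norm_inv, norm_mul, norm_ofNat, mul_inv]
        ring

lemma norm_profileOperator_le_half (hS : ∀ c : ℂ, c.re ≤ 0 → ‖S c‖ ≤ N) (hk : k.re ≤ 0)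
    (hkN : 2 * N ≤ ‖k‖) : ‖profileOperator S k‖ ≤ 1 / 2 :=
  (norm_profileOperator_le hS hk).trans
    (div_le_of_le_mul₀ (norm_nonneg k) one_half_pos.le (by linarith))

variable [CompleteSpace E]

lemma profile_eq (hS : ∀ c : ℂ, c.re ≤ 0 → ‖S c‖ ≤ N) (hk : k.re ≤ 0) (hkN : 2 * N ≤ ‖k‖) :
    profile S v k = v + profileOperator S k (profile S v k) :=
  ringInverse_one_sub_apply
    ((norm_profileOperator_le_half hS hk hkN).trans_lt one_half_lt_one) v

lemma norm_profile_le (hS : ∀ c : ℂ, c.re ≤ 0 → ‖S c‖ ≤ N) (hk : k.re ≤ 0)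
    (hkN : 2 * N ≤ ‖k‖) : ‖profile S v k‖ ≤ 2 * ‖v‖ := by
  have h : ‖profile S v k‖ ≤ ‖v‖ + 1 / 2 * ‖profile S v k‖ := by
    conv_lhs => rw [profile_eq hS hk hkN]
    exact norm_add_le_of_le le_rfl
      (ContinuousLinearMap.le_of_opNorm_le _ (norm_profileOperator_le_half hS hk hkN) _)
  linarith

lemma norm_profile_sub_le (hS : ∀ c : ℂ, c.re ≤ 0 → ‖S c‖ ≤ N) (hk : k.re ≤ 0)
    (hkN : 2 * N ≤ ‖k‖) : ‖profile S v k - v‖ ≤ 2 * N * ‖k‖⁻¹ * ‖v‖ := by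
  have hA := norm_profileOperator_le hS hk
  calc ‖profile S v k - v‖ = ‖profileOperator S k (profile S v k)‖ := by
        rw [sub_eq_of_eq_add' (profile_eq hS hk hkN)]
    _ ≤ N / ‖k‖ * (2 * ‖v‖) :=
        ContinuousLinearMap.le_of_opNorm_le_of_le _ hA (norm_profile_le hS hk hkN)
    _ = 2 * N * ‖k‖⁻¹ * ‖v‖ := by ring

lemma norm_derivProfile_add_le (hS : ∀ c : ℂ, c.re ≤ 0 → ‖S c‖ ≤ N) (hk : k.re ≤ 0)
    (hkN : 2 * N ≤ ‖k‖) : ‖derivProfile S v k + k • v‖ ≤ 2 * N * ‖v‖ := by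
  have h2k : (2 * k).re ≤ 0 := by simpa using mul_nonpos_of_nonneg_of_nonpos zero_le_two hk
  have hadd : ‖S (2 * k) + S 0‖ ≤ N + N := norm_add_le_of_le (hS _ h2k) (hS 0 le_rfl)
  calc ‖derivProfile S v k + k • v‖ = 2⁻¹ * ‖(S (2 * k) + S 0) (profile S v k)‖ := by
        rw [derivProfile, neg_add_cancel_comm, norm_smul, norm_inv, norm_ofNat]
    _ ≤ 2⁻¹ * ((N + N) * (2 * ‖v‖)) := by
        gcongr
        exact ContinuousLinearMap.le_of_opNorm_le_of_le _ hadd (norm_profile_le hS hk hkN)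
    _ = 2 * N * ‖v‖ := by ring

lemma analyticAt_comp_two_mul (hS : Differentiable ℂ S) (k : ℂ) :
    AnalyticAt ℂ (fun c => S (2 * c)) k :=
  (hS.comp (differentiable_id.const_mul 2)).analyticAt k

lemma analyticAt_profileOperator (hS : Differentiable ℂ S) (hk : k ≠ 0) :
    AnalyticAt ℂ (profileOperator S) k := by
  have hinv : AnalyticAt ℂ (fun c : ℂ => (2 * c)⁻¹) k :=
    (analyticAt_const.mul analyticAt_id).inv (mul_ne_zero two_ne_zero hk)
  exact hinv.smul ((analyticAt_comp_two_mul hS k).sub analyticAt_const)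

lemma analyticAt_profile (hS : Differentiable ℂ S) (hk : k ≠ 0)
    (hA : ‖profileOperator S k‖ < 1) : AnalyticAt ℂ (profile S v) k := by
  have hinv := analyticOnNhd_inverse (𝕜 := ℂ) (1 - profileOperator S k)
    (isUnit_one_sub_of_norm_lt_one hA)
  exact analyticAt_clm_apply
    (hinv.fun_comp (f := fun c => 1 - profileOperator S c)
      (analyticAt_const.sub (analyticAt_profileOperator hS hk)))
    analyticAt_const

lemma analyticAt_derivProfile (hS : Differentiable ℂ S) (hk : k ≠ 0)
    (hA : ‖profileOperator S k‖ < 1) : AnalyticAt ℂ (derivProfile S v) k := by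
  have hsum : AnalyticAt ℂ (fun c => (S (2 * c) + S 0) (profile S v c)) k :=
    analyticAt_clm_apply ((analyticAt_comp_two_mul hS k).add analyticAt_const)
      (analyticAt_profile hS hk hA)
  exact (analyticAt_id.smul analyticAt_const).neg.add (analyticAt_const.smul hsum)

end Profile

/-! ### Birkhoff solutions -/

section Birkhoff

variable {q : ℝ → ℂ} {T R K : ℝ} {s : ℂ} {e e' : ℝ → ℂ → ℂ}

/-- The set of spectral parameters on which Birkhoff solutions are defined. -/
def birkhoffRegion (R : ℝ) : Set ℂ := {ρ | 0 ≤ ρ.im ∧ R ≤ ‖ρ‖}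

/-- `e · ρ`, with derivative `e' · ρ`, is a family of solutions of `-y'' + q y = ρ² y` on `[0, T]`
which is analytic in `ρ` and uniformly asymptotic to `exp (s ρ x)`, with error constant `K`. -/
structure IsBirkhoffSolution (q : ℝ → ℂ) (T R K : ℝ) (s : ℂ) (e e' : ℝ → ℂ → ℂ) : Prop where
  isSturmLiouvilleSolution : ∀ ρ ∈ birkhoffRegion R,
    IsSturmLiouvilleSolution q (ρ ^ 2) (fun x => e x ρ) (fun x => e' x ρ) 0 T
  analyticOnNhd : ∀ x ∈ Icc 0 T, AnalyticOnNhd ℂ (e x) (birkhoffRegion R)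
  analyticOnNhd_deriv : ∀ x ∈ Icc 0 T, AnalyticOnNhd ℂ (e' x) (birkhoffRegion R)
  norm_sub_le : ∀ ρ ∈ birkhoffRegion R, ∀ x ∈ Icc 0 T,
    ‖e x ρ - cexp (s * ρ * x)‖ ≤ K * ‖ρ‖⁻¹ * ‖cexp (s * ρ * x)‖
  norm_deriv_sub_le : ∀ ρ ∈ birkhoffRegion R, ∀ x ∈ Icc 0 T,
    ‖e' x ρ - s * ρ * cexp (s * ρ * x)‖ ≤ K * ‖cexp (s * ρ * x)‖

lemma IsBirkhoffSolution.reflect (h : IsBirkhoffSolution (fun x => q (T - x)) T R K s e e') :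
    IsBirkhoffSolution q T R K (-s) (fun x ρ => cexp (-s * ρ * T) * e (T - x) ρ)
      (fun x ρ => cexp (-s * ρ * T) * -e' (T - x) ρ) := by
  have hmem {x : ℝ} (hx : x ∈ Icc 0 T) : T - x ∈ Icc 0 T :=
    ⟨sub_nonneg.2 hx.2, sub_le_self T hx.1⟩
  have hexp (ρ : ℂ) (x : ℝ) :
      cexp (-s * ρ * x) = cexp (-s * ρ * T) * cexp (s * ρ * (T - x : ℝ)) := by
    rw [← Complex.exp_add]
    push_cast
    ring_nf
  have hfactor (ρ : ℂ) : AnalyticAt ℂ (fun ρ => cexp (-s * ρ * T)) ρ := by fun_prop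
  refine ⟨fun ρ hρ => ?_, fun x hx ρ hρ => ?_, fun x hx ρ hρ => ?_, fun ρ hρ x hx => ?_,
    fun ρ hρ x hx => ?_⟩
  · have hsol := ((h.isSturmLiouvilleSolution ρ hρ).comp_const_sub T).const_mul (cexp (-s * ρ * T))
    simpa only [sub_sub_cancel, sub_self, sub_zero] using hsol
  · exact (hfactor ρ).mul (h.analyticOnNhd _ (hmem hx) ρ hρ)
  · exact (hfactor ρ).mul (h.analyticOnNhd_deriv _ (hmem hx) ρ hρ).neg
  · rw [hexp ρ x, ← mul_sub, norm_mul, norm_mul, mul_left_comm]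
    gcongr
    exact h.norm_sub_le ρ hρ _ (hmem hx)
  · have hneg : cexp (-s * ρ * T) * -e' (T - x) ρ - -s * ρ * cexp (-s * ρ * x) =
        -(cexp (-s * ρ * T) *
          (e' (T - x) ρ - s * ρ * cexp (s * ρ * (T - x : ℝ)))) := by
      rw [hexp ρ x]
      ring
    rw [hneg, norm_neg, hexp ρ x, norm_mul, norm_mul, mul_left_comm]
    gcongr
    exact h.norm_deriv_sub_le ρ hρ _ (hmem hx)

section GrowingSolution

variable (hT : 0 ≤ T) (hq : IntervalIntegrable q volume 0 T) {k : ℂ}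

lemma isSturmLiouvilleSolution_profile (hk0 : k ≠ 0) (hk : k.re ≤ 0)
    (hkN : 2 * (∫ t in (0 : ℝ)..T, ‖q t‖) ≤ ‖k‖) :
    IsSturmLiouvilleSolution q (-k ^ 2)
      (fun x => cexp (-k * x) * IccExtend hT (profile (duhamel hT hq) 1 k :) x)
      (fun x => cexp (-k * x) * IccExtend hT (derivProfile (duhamel hT hq) 1 k :) x) 0 T := by
  have hw : profile (duhamel hT hq) 1 k = 1 + profileOperator (duhamel hT hq) k _ :=
    profile_eq (fun c hc => norm_duhamel_le hT hq hc) hk hkN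
  have hP := hasACDerivOn_IccExtend_duhamel hT hq (2 * k) (profile (duhamel hT hq) 1 k)
  have hM := hasACDerivOn_IccExtend_duhamel hT hq 0 (profile (duhamel hT hq) 1 k)
  simp only [zero_mul, zero_add] at hM
  have hderiv (x : ℝ) : IccExtend hT (derivProfile (duhamel hT hq) 1 k :) x =
      -(k * 1) + 2⁻¹ * (IccExtend hT (duhamel hT hq (2 * k) (profile (duhamel hT hq) 1 k)) x +
        IccExtend hT (duhamel hT hq 0 (profile (duhamel hT hq) 1 k)) x) := rfl
  simp only [hderiv, mul_one]
  exact isSturmLiouvilleSolution_exp_neg_mul hk0 hP hM fun x _ => DFunLike.congr_fun hw _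

/-- The Birkhoff solution asymptotic to `exp (-i ρ x)`. -/
noncomputable def growingSolution (x : ℝ) (ρ : ℂ) : ℂ :=
  cexp (-I * ρ * x) * IccExtend hT (profile (duhamel hT hq) 1 (I * ρ) :) x

/-- The derivative of `growingSolution` in `x`. -/
noncomputable def growingSolutionDeriv (x : ℝ) (ρ : ℂ) : ℂ :=
  cexp (-I * ρ * x) * IccExtend hT (derivProfile (duhamel hT hq) 1 (I * ρ) :) x

lemma analyticAt_cexp_mul_IccExtend {f : ℂ → C(Icc (0 : ℝ) T, ℂ)} {ρ : ℂ}
    (hf : AnalyticAt ℂ f (I * ρ)) (x : ℝ) :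
    AnalyticAt ℂ (fun ρ => cexp (-I * ρ * x) * IccExtend hT (f (I * ρ)) x) ρ := by
  have hexp : AnalyticAt ℂ (fun ρ => cexp (-I * ρ * x)) ρ := by fun_prop
  have hfI : AnalyticAt ℂ (fun ρ => f (I * ρ)) ρ :=
    hf.fun_comp (f := fun ρ => I * ρ) (analyticAt_const.mul analyticAt_id)
  exact hexp.mul (analyticAt_clm_apply
    (analyticAt_const (v := ContinuousMap.evalCLM ℂ (projIcc 0 T hT x))) hfI)

lemma norm_one_continuousMap_Icc (hT : 0 ≤ T) : ‖(1 : C(Icc (0 : ℝ) T, ℂ))‖ = 1 :=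
  have : Nonempty (Icc (0 : ℝ) T) := ⟨0, left_mem_Icc.2 hT⟩
  norm_one

variable {ρ : ℂ}

lemma norm_growingSolution_sub_le (him : 0 ≤ ρ.im)
    (hN : 2 * (∫ t in (0 : ℝ)..T, ‖q t‖) ≤ ‖ρ‖) (x : ℝ) :
    ‖growingSolution hT hq x ρ - cexp (-I * ρ * x)‖ ≤
      2 * (∫ t in (0 : ℝ)..T, ‖q t‖) * ‖ρ‖⁻¹ * ‖cexp (-I * ρ * x)‖ := by
  have hnorm : ‖I * ρ‖ = ‖ρ‖ := by rw [norm_mul, norm_I, one_mul]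
  have hprofile := norm_profile_sub_le (v := 1) (fun c hc => norm_duhamel_le hT hq hc)
    (by simpa using him : (I * ρ).re ≤ 0) (hN.trans_eq hnorm.symm)
  rw [norm_one_continuousMap_Icc hT, mul_one, hnorm] at hprofile
  rw [growingSolution, ← mul_sub_one, norm_mul, mul_comm]
  gcongr
  exact (ContinuousMap.norm_coe_le_norm _ (projIcc 0 T hT x)).trans hprofile

lemma norm_growingSolutionDeriv_sub_le (him : 0 ≤ ρ.im)
    (hN : 2 * (∫ t in (0 : ℝ)..T, ‖q t‖) ≤ ‖ρ‖) (x : ℝ) :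
    ‖growingSolutionDeriv hT hq x ρ - -I * ρ * cexp (-I * ρ * x)‖ ≤
      2 * (∫ t in (0 : ℝ)..T, ‖q t‖) * ‖cexp (-I * ρ * x)‖ := by
  have hnorm : ‖I * ρ‖ = ‖ρ‖ := by rw [norm_mul, norm_I, one_mul]
  have hprofile := norm_derivProfile_add_le (v := 1) (fun c hc => norm_duhamel_le hT hq hc)
    (by simpa using him : (I * ρ).re ≤ 0) (hN.trans_eq hnorm.symm)
  rw [norm_one_continuousMap_Icc hT, mul_one] at hprofile
  have hval : IccExtend hT (derivProfile (duhamel hT hq) 1 (I * ρ) :) x =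
      derivProfile (duhamel hT hq) 1 (I * ρ) (projIcc 0 T hT x) := rfl
  have hdiff : growingSolutionDeriv hT hq x ρ - -I * ρ * cexp (-I * ρ * x) =
      (derivProfile (duhamel hT hq) 1 (I * ρ) + (I * ρ) • 1) (projIcc 0 T hT x) *
        cexp (-I * ρ * x) := by
    rw [growingSolutionDeriv, hval, ContinuousMap.add_apply, ContinuousMap.smul_apply,
      ContinuousMap.one_apply, smul_eq_mul]
    ring
  rw [hdiff, norm_mul]
  gcongr
  exact (ContinuousMap.norm_coe_le_norm _ (projIcc 0 T hT x)).trans hprofile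

lemma isBirkhoffSolution_growingSolution (hK : 2 * (∫ t in (0 : ℝ)..T, ‖q t‖) ≤ K) (hKR : K ≤ R)
    (hR : 0 < R) :
    IsBirkhoffSolution q T R K (-I) (growingSolution hT hq) (growingSolutionDeriv hT hq) := by
  have hnorm (ρ : ℂ) : ‖I * ρ‖ = ‖ρ‖ := by rw [norm_mul, norm_I, one_mul]
  have hN {ρ : ℂ} (hρ : ρ ∈ birkhoffRegion R) := hK.trans (hKR.trans hρ.2)
  have hne {ρ : ℂ} (hρ : ρ ∈ birkhoffRegion R) : I * ρ ≠ 0 :=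
    mul_ne_zero I_ne_zero (norm_pos_iff.1 (hR.trans_le hρ.2))
  have hre {ρ : ℂ} (hρ : ρ ∈ birkhoffRegion R) : (I * ρ).re ≤ 0 := by simpa using hρ.1
  have hop {ρ : ℂ} (hρ : ρ ∈ birkhoffRegion R) : ‖profileOperator (duhamel hT hq) (I * ρ)‖ < 1 :=
    (norm_profileOperator_le_half (fun c hc => norm_duhamel_le hT hq hc) (hre hρ)
      ((hN hρ).trans_eq (hnorm ρ).symm)).trans_lt one_half_lt_one
  refine ⟨fun ρ hρ => ?_, fun x _ ρ hρ => ?_, fun x _ ρ hρ => ?_, fun ρ hρ x _ => ?_,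
    fun ρ hρ x _ => ?_⟩
  · have hsol := isSturmLiouvilleSolution_profile hT hq (hne hρ) (hre hρ)
      ((hN hρ).trans_eq (hnorm ρ).symm)
    simpa [growingSolution, growingSolutionDeriv, mul_pow] using hsol
  · exact analyticAt_cexp_mul_IccExtend hT
      (analyticAt_profile (differentiable_duhamel hT hq) (hne hρ) (hop hρ)) x
  · exact analyticAt_cexp_mul_IccExtend hT
      (analyticAt_derivProfile (differentiable_duhamel hT hq) (hne hρ) (hop hρ)) x
  · exact (norm_growingSolution_sub_le hT hq hρ.1 (hN hρ) x).trans (by gcongr)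
  · exact (norm_growingSolutionDeriv_sub_le hT hq hρ.1 (hN hρ) x).trans (by gcongr)

end GrowingSolution

lemma norm_mul_sub_mul_le {A : Type*} [NormedRing A] {a b u v : A} {δ ε : ℝ}
    (ha : ‖a - u‖ ≤ δ * ‖u‖) (hb : ‖b - v‖ ≤ ε * ‖v‖) :
    ‖a * b - u * v‖ ≤ (δ * ε + δ + ε) * (‖u‖ * ‖v‖) :=
  calc ‖a * b - u * v‖ = ‖(a - u) * (b - v) + (a - u) * v + u * (b - v)‖ := by noncomm_ring
    _ ≤ ‖a - u‖ * ‖b - v‖ + ‖a - u‖ * ‖v‖ + ‖u‖ * ‖b - v‖ :=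
      norm_add₃_le.trans (by gcongr <;> exact norm_mul_le _ _)
    _ ≤ δ * ‖u‖ * (ε * ‖v‖) + δ * ‖u‖ * ‖v‖ + ‖u‖ * (ε * ‖v‖) := by
      gcongr
      exact (norm_nonneg _).trans ha
    _ = (δ * ε + δ + ε) * (‖u‖ * ‖v‖) := by ring

lemma wronskian_ne_zero_of_norm_sub_le {𝕜 : Type*} [NormedField 𝕜] [NormedAlgebra ℝ 𝕜]
    {a a' b b' u v κ : 𝕜} (huv : u * v = 1) (hκ : κ ≠ 0) (ha : ‖a - u‖ ≤ 1 / 4 * ‖u‖)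
    (ha' : ‖a' - κ * u‖ ≤ 1 / 4 * ‖κ * u‖) (hb : ‖b - v‖ ≤ 1 / 4 * ‖v‖)
    (hb' : ‖b' - -κ * v‖ ≤ 1 / 4 * ‖-κ * v‖) : a * b' - a' * b ≠ 0 := by
  have hnorm_uv : ‖u‖ * ‖v‖ = 1 := by rw [← norm_mul, huv, norm_one]
  have hleft : ‖a * b' + κ‖ ≤ 9 / 16 * ‖κ‖ := by
    have h := norm_mul_sub_mul_le ha hb'
    rw [mul_left_comm, huv, mul_one, sub_neg_eq_add, norm_mul, norm_neg, mul_left_comm ‖u‖,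
      hnorm_uv] at h
    linarith
  have hright : ‖a' * b - κ‖ ≤ 9 / 16 * ‖κ‖ := by
    have h := norm_mul_sub_mul_le ha' hb
    rw [mul_assoc κ, huv, mul_one, norm_mul, mul_assoc ‖κ‖, hnorm_uv] at h
    linarith
  intro hW
  have hκκ : ‖κ + κ‖ = 2 * ‖κ‖ := by
    rw [← two_smul ℝ, norm_smul, Real.norm_ofNat]
  have hle : ‖κ + κ‖ ≤ 9 / 16 * ‖κ‖ + 9 / 16 * ‖κ‖ := by
    calc ‖κ + κ‖ = ‖(a * b' + κ) - (a' * b - κ)‖ := by rw [sub_eq_zero.1 hW]; congr 1; ring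
      _ ≤ 9 / 16 * ‖κ‖ + 9 / 16 * ‖κ‖ := norm_sub_le_of_le hleft hright
  linarith [norm_pos_iff.2 hκ]

lemma IsBirkhoffSolution.wronskian_ne_zero {e₁ e₁' e₂ e₂' : ℝ → ℂ → ℂ}
    (h₁ : IsBirkhoffSolution q T R K s e₁ e₁') (h₂ : IsBirkhoffSolution q T R K (-s) e₂ e₂')
    (hs : ‖s‖ = 1) (hR : 0 < R) (hKR : 4 * K ≤ R) {ρ : ℂ} (hρ : ρ ∈ birkhoffRegion R) {x : ℝ}
    (hx : x ∈ Icc 0 T) : e₁ x ρ * e₂' x ρ - e₁' x ρ * e₂ x ρ ≠ 0 := by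
  have hρ0 : 0 < ‖ρ‖ := hR.trans_le hρ.2
  have hsρ : ‖s * ρ‖ = ‖ρ‖ := by rw [norm_mul, hs, one_mul]
  have hK : K ≤ 1 / 4 * ‖ρ‖ := by linarith [hρ.2]
  have hK' : K * ‖ρ‖⁻¹ ≤ 1 / 4 := by rwa [← div_eq_mul_inv, div_le_iff₀ hρ0]
  have hexp : cexp (s * ρ * x) * cexp (-s * ρ * x) = 1 := by
    rw [← Complex.exp_add, ← add_mul, ← add_mul, add_neg_cancel, zero_mul, zero_mul, exp_zero]
  refine wronskian_ne_zero_of_norm_sub_le (κ := s * ρ) hexp (norm_pos_iff.1 (hρ0.trans_eq hsρ.symm))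
    ((h₁.norm_sub_le ρ hρ x hx).trans (by gcongr)) ((h₁.norm_deriv_sub_le ρ hρ x hx).trans ?_)
    ((h₂.norm_sub_le ρ hρ x hx).trans (by gcongr)) ?_
  · rw [norm_mul (s * ρ), hsρ, ← mul_assoc]
    gcongr
  · rw [← neg_mul, norm_mul (-s * ρ), neg_mul, norm_neg, hsρ, ← mul_assoc, ← neg_mul]
    exact (h₂.norm_deriv_sub_le ρ hρ x hx).trans (by gcongr)

end Birkhoff

theorem birkhoff_fundamental_system_general {T : ℝ} (hT : 0 ≤ T) {q : ℝ → ℂ}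
    (hq : IntegrableOn q (Icc 0 T)) :
    ∃ R K : ℝ, 0 < R ∧ 0 < K ∧ ∃ e₁ e₁' e₂ e₂' : ℝ → ℂ → ℂ,
      IsBirkhoffSolution q T R K I e₁ e₁' ∧ IsBirkhoffSolution q T R K (-I) e₂ e₂' ∧
      ∀ ρ ∈ birkhoffRegion R, ∀ x ∈ Icc 0 T, e₁ x ρ * e₂' x ρ - e₁' x ρ * e₂ x ρ ≠ 0 := by
  replace hq := (intervalIntegrable_iff_integrableOn_Icc_of_le hT).2 hq
  have hq_reflect : IntervalIntegrable (fun x => q (T - x)) volume 0 T := by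
    simpa using (hq.comp_sub_left T).symm
  set N := ∫ t in (0 : ℝ)..T, ‖q t‖
  have hN : 0 ≤ N := intervalIntegral.integral_nonneg hT fun t _ => norm_nonneg (q t)
  have hN_reflect : ∫ t in (0 : ℝ)..T, ‖q (T - t)‖ = N := by
    simp [intervalIntegral.integral_comp_sub_left (fun t => ‖q t‖), N]
  have h₂ := isBirkhoffSolution_growingSolution hT hq (K := 2 * N + 1) (R := 4 * (2 * N + 1))
    (by linarith) (by linarith) (by linarith)
  have h₁ := (isBirkhoffSolution_growingSolution hT hq_reflect (K := 2 * N + 1)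
    (R := 4 * (2 * N + 1)) (by linarith) (by linarith) (by linarith)).reflect
  rw [neg_neg] at h₁
  exact ⟨_, _, by linarith, by linarith, _, _, _, _, h₁, h₂, fun ρ hρ x hx =>
    h₁.wronskian_ne_zero h₂ norm_I (by linarith) le_rfl hρ hx⟩

/-- existence of a Birkhoff-type fundamental system `e₁(x,ρ)`, `e₂(x,ρ)`
for `-y'' + q y = ρ² y`, defined for `Im ρ ≥ 0`, `|ρ| ≥ ρ*`, continuous and analytic
in `ρ`, with the asymptotics `e₁^{(ν)}(x,ρ) = (iρ)^ν e^{iρx}[1]`,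
`e₂^{(ν)}(x,ρ) = (-iρ)^ν e^{-iρx}[1]` uniformly in `x ∈ [0,T]`. -/
theorem birkhoff_fundamental_system
    (T : ℝ) (hT : 0 < T) (q : ℝ → ℝ) (hq : IntegrableOn q (Icc 0 T)) :
    ∃ (ρstar K : ℝ), 0 < ρstar ∧ 0 < K ∧
      ∃ e₁ e₁' e₂ e₂' : ℝ → ℂ → ℂ,
        (∀ ρ : ℂ, 0 ≤ ρ.im → ρstar ≤ ‖ρ‖ →
          -- (i) solutions forming a fundamental system
          SLSol q T (ρ ^ 2) (fun x => e₁ x ρ) (fun x => e₁' x ρ) ∧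
          SLSol q T (ρ ^ 2) (fun x => e₂ x ρ) (fun x => e₂' x ρ) ∧
          (∀ x ∈ Icc (0:ℝ) T, e₁ x ρ * e₂' x ρ - e₁' x ρ * e₂ x ρ ≠ 0)) ∧
        -- (ii) continuity and analyticity in ρ
        (∀ x ∈ Icc (0:ℝ) T,
          ContinuousOn (fun ρ => e₁ x ρ) {ρ : ℂ | 0 ≤ ρ.im ∧ ρstar ≤ ‖ρ‖} ∧
          ContinuousOn (fun ρ => e₁' x ρ) {ρ : ℂ | 0 ≤ ρ.im ∧ ρstar ≤ ‖ρ‖} ∧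
          ContinuousOn (fun ρ => e₂ x ρ) {ρ : ℂ | 0 ≤ ρ.im ∧ ρstar ≤ ‖ρ‖} ∧
          ContinuousOn (fun ρ => e₂' x ρ) {ρ : ℂ | 0 ≤ ρ.im ∧ ρstar ≤ ‖ρ‖} ∧
          AnalyticOnNhd ℂ (fun ρ => e₁ x ρ) {ρ : ℂ | 0 < ρ.im ∧ ρstar < ‖ρ‖} ∧
          AnalyticOnNhd ℂ (fun ρ => e₁' x ρ) {ρ : ℂ | 0 < ρ.im ∧ ρstar < ‖ρ‖} ∧
          AnalyticOnNhd ℂ (fun ρ => e₂ x ρ) {ρ : ℂ | 0 < ρ.im ∧ ρstar < ‖ρ‖} ∧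
          AnalyticOnNhd ℂ (fun ρ => e₂' x ρ) {ρ : ℂ | 0 < ρ.im ∧ ρstar < ‖ρ‖}) ∧
        -- (iii) asymptotics, uniform in x ∈ [0,T]
        (∀ ρ : ℂ, 0 ≤ ρ.im → ρstar ≤ ‖ρ‖ → ∀ x ∈ Icc (0:ℝ) T,
          ‖e₁ x ρ - Complex.exp (I * ρ * x)‖ ≤ K * ‖ρ‖⁻¹ * Real.exp (-ρ.im * x) ∧
          ‖e₁' x ρ - (I * ρ) * Complex.exp (I * ρ * x)‖ ≤ K * Real.exp (-ρ.im * x) ∧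
          ‖e₂ x ρ - Complex.exp (-(I * ρ) * x)‖ ≤ K * ‖ρ‖⁻¹ * Real.exp (ρ.im * x) ∧
          ‖e₂' x ρ - (-(I * ρ)) * Complex.exp (-(I * ρ) * x)‖ ≤ K * Real.exp (ρ.im * x)) := by
  obtain ⟨R, K, hR, hK, e₁, e₁', e₂, e₂', h₁, h₂, hW⟩ :=
    birkhoff_fundamental_system_general hT.le hq.ofReal
  have hsub : {ρ : ℂ | 0 < ρ.im ∧ R < ‖ρ‖} ⊆ birkhoffRegion R := fun ρ hρ => ⟨hρ.1.le, hρ.2.le⟩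
  refine ⟨R, K, hR, hK, e₁, e₁', e₂, e₂', fun ρ him hρ => ?_, fun x hx => ?_,
    fun ρ him hρ x hx => ?_⟩
  · exact ⟨(h₁.isSturmLiouvilleSolution ρ ⟨him, hρ⟩).slSol hT.le,
      (h₂.isSturmLiouvilleSolution ρ ⟨him, hρ⟩).slSol hT.le, hW ρ ⟨him, hρ⟩⟩
  · exact ⟨(h₁.analyticOnNhd x hx).continuousOn, (h₁.analyticOnNhd_deriv x hx).continuousOn,
      (h₂.analyticOnNhd x hx).continuousOn, (h₂.analyticOnNhd_deriv x hx).continuousOn,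
      (h₁.analyticOnNhd x hx).mono hsub, (h₁.analyticOnNhd_deriv x hx).mono hsub,
      (h₂.analyticOnNhd x hx).mono hsub, (h₂.analyticOnNhd_deriv x hx).mono hsub⟩
  · have hdecay : ‖cexp (I * ρ * x)‖ = Real.exp (-ρ.im * x) := by simp [norm_exp]
    have hgrowth : ‖cexp (-I * ρ * x)‖ = Real.exp (ρ.im * x) := by simp [norm_exp]
    rw [← neg_mul I ρ, ← hdecay, ← hgrowth]
    exact ⟨h₁.norm_sub_le ρ ⟨him, hρ⟩ x hx, h₁.norm_deriv_sub_le ρ ⟨him, hρ⟩ x hx,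
      h₂.norm_sub_le ρ ⟨him, hρ⟩ x hx, h₂.norm_deriv_sub_le ρ ⟨him, hρ⟩ x hx⟩
end

section
/- Let f be an entire function such that |f(λ)| ≤ A·exp(A·|λ|^{1/2}) for all λ ∈ ℂ and some A > 0. Suppose that for some θ with 0 < θ < π, f is bounded on the sector {λ ∈ ℂ \ {0} : θ ≤ |arg λ| ≤ π}, and that f(λ) → c as λ → −∞ along the negative real axis. Then f(λ) = c for all λ ∈ ℂ. -/
/-!
The exponential carries the horizontal strip `|Im w| < θ`, of width `2θ`, into the sector
`|arg z| < θ`, and growth of order `ρ` on the sector becomes growth `exp (B * exp (ρ * |Re w|))` on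
the strip. The Phragmén–Lindelöf principle for the strip applies as long as `ρ < π / (2θ)`, and
shows that an entire function of order `ρ` which is bounded off the sector is bounded everywhere,
hence constant by Liouville's theorem. For `ρ = 1 / 2` the condition on the sector is `θ < π`.
-/

open Filter Complex

section Sector

open Set Asymptotics Bornology
open scoped Topology Real

/-- The open sector of half-angle `θ` about the positive real axis, on which the
Phragmén–Lindelöf principle is applied. The vertex is excluded explicitly because Mathlib sets
`arg 0 = 0`. -/
def openSector (θ : ℝ) : Set ℂ := {z | z ≠ 0 ∧ |arg z| < θ}

theorem zero_mem_closure_openSector {θ : ℝ} (hθ : 0 < θ) : 0 ∈ closure (openSector θ) := by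
  have hlim : Tendsto (fun t : ℝ => (t : ℂ)) (𝓝[>] 0) (𝓝 0) :=
    (continuous_ofReal.tendsto' 0 0 ofReal_zero).mono_left nhdsWithin_le_nhds
  refine mem_closure_of_tendsto hlim ?_
  filter_upwards [self_mem_nhdsWithin] with t (ht : 0 < t)
  exact ⟨ofReal_ne_zero.2 ht.ne', by rwa [arg_ofReal_of_nonneg ht.le, abs_zero]⟩

theorem abs_arg_exp {w : ℂ} (hw : |w.im| ≤ π) : |arg (exp w)| = |w.im| := by
  obtain ⟨hlower, hupper⟩ := abs_le.1 hw
  rcases hlower.eq_or_lt with him | him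
  · have hneg : -π + 2 * π = π := by ring
    simp [arg_exp, ← him, hneg]
  · rw [arg_exp, (toIocMod_eq_self _).2 ⟨him, by linarith⟩]

theorem abs_arg_exp_le (w : ℂ) : |arg (exp w)| ≤ |w.im| := by
  rcases le_total |w.im| π with hw | hw
  · exact (abs_arg_exp hw).le
  · exact (abs_arg_le_pi _).trans hw

theorem mapsTo_exp_openSector (θ : ℝ) : MapsTo exp (im ⁻¹' Ioo (-θ) θ) (openSector θ) :=
  fun w hw => ⟨exp_ne_zero w, (abs_arg_exp_le w).trans_lt (abs_lt.2 hw)⟩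

variable {E : Type*} [NormedAddCommGroup E] {f : ℂ → E} {s t : Set ℂ} {B ρ θ C : ℝ}

theorem isBigO_one_comp_exp_comap_re_atBot (hst : MapsTo exp t s)
    (hf : ContinuousWithinAt f s 0) :
    (f ∘ exp) =O[comap re atBot ⊓ 𝓟 t] fun _ => (1 : ℝ) :=
  (hf.tendsto.comp (tendsto_exp_comap_re_atBot.inf hst.tendsto)).isBigO_one ℝ

theorem isBigO_exp_exp_comp_exp_comap_re_atTop (hst : MapsTo exp t s)
    (hf : f =O[cobounded ℂ ⊓ 𝓟 s] fun z => Real.exp (B * ‖z‖ ^ ρ)) :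
    (f ∘ exp) =O[comap re atTop ⊓ 𝓟 t] fun w => Real.exp (B * Real.exp (ρ * w.re)) := by
  refine (hf.comp_tendsto (tendsto_exp_comap_re_atTop.inf hst.tendsto)).congr_right fun w => ?_
  rw [Function.comp_apply, norm_exp, ← Real.exp_mul, mul_comm w.re]

theorem isBigO_exp_exp_comp_exp (hst : MapsTo exp t s) (hf₀ : ContinuousWithinAt f s 0)
    (hf : f =O[cobounded ℂ ⊓ 𝓟 s] fun z => Real.exp (B * ‖z‖ ^ ρ)) :
    (f ∘ exp) =O[comap (abs ∘ re) atTop ⊓ 𝓟 t]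
      fun w => Real.exp (max B 0 * Real.exp (ρ * |w.re|)) := by
  rw [← comap_comap, comap_abs_atTop, comap_sup, inf_sup_right]
  refine IsBigO.sup ((isBigO_one_comp_exp_comap_re_atBot hst hf₀).trans_le fun w => ?_)
    ((isBigO_exp_exp_comp_exp_comap_re_atTop hst hf).trans (.of_norm_eventuallyLE ?_))
  · rw [norm_one, Real.norm_eq_abs, Real.abs_exp, Real.one_le_exp_iff]
    positivity
  · have hre : ∀ᶠ w in comap re atTop ⊓ 𝓟 t, 0 ≤ w.re :=
      (tendsto_comap.eventually_ge_atTop 0).filter_mono inf_le_left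
    filter_upwards [hre] with w hw
    rw [Real.norm_eq_abs, Real.abs_exp, abs_of_nonneg hw]
    gcongr
    exact le_max_left B 0

variable [NormedSpace ℂ E]

theorem phragmenLindelof_openSector (hθ₀ : 0 < θ) (hθπ : θ ≤ π)
    (hd : DiffContOnCl ℂ f (openSector θ))
    (hB : ∃ ρ < π / (2 * θ), ∃ B,
      f =O[cobounded ℂ ⊓ 𝓟 (openSector θ)] fun z => Real.exp (B * ‖z‖ ^ ρ))
    (hC : ∀ z, z ≠ 0 → |arg z| = θ → ‖f z‖ ≤ C) {z : ℂ} (hz₀ : z ≠ 0) (hz : |arg z| ≤ θ) :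
    ‖f z‖ ≤ C := by
  obtain ⟨ρ, hρ, B, hO⟩ := hB
  have hf₀ : ContinuousWithinAt f (openSector θ) 0 :=
    (hd.continuousOn 0 (zero_mem_closure_openSector hθ₀)).mono subset_closure
  have hboundary (w : ℂ) (hw : |w.im| = θ) : ‖f (exp w)‖ ≤ C :=
    hC _ (exp_ne_zero w) (by rw [abs_arg_exp (hw.trans_le hθπ), hw])
  obtain ⟨hlower, hupper⟩ := abs_le.1 hz
  rw [← exp_log hz₀]
  refine PhragmenLindelof.horizontal_strip (f := f ∘ exp)
    (hd.comp differentiable_exp.diffContOnCl (mapsTo_exp_openSector θ))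
    ⟨ρ, ?_, max B 0, isBigO_exp_exp_comp_exp (mapsTo_exp_openSector θ) hf₀ hO⟩
    (fun w hw => hboundary w ?_) (fun w hw => hboundary w ?_)
    (hlower.trans_eq (log_im z).symm) ((log_im z).trans_le hupper)
  · rwa [sub_neg_eq_add, ← two_mul]
  · rw [hw, abs_neg, abs_of_pos hθ₀]
  · rw [hw, abs_of_pos hθ₀]

theorem isBounded_range_of_bounded_off_openSector (hf : Differentiable ℂ f)
    (hθ₀ : 0 < θ) (hθπ : θ ≤ π)
    (hB : ∃ ρ < π / (2 * θ), ∃ B, f =O[cobounded ℂ] fun z => Real.exp (B * ‖z‖ ^ ρ))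
    (hC : ∀ z, z ≠ 0 → θ ≤ |arg z| → ‖f z‖ ≤ C) : IsBounded (range f) := by
  obtain ⟨ρ, hρ, B, hO⟩ := hB
  refine isBounded_iff_forall_norm_le.2 ⟨max C ‖f 0‖, forall_mem_range.2 fun z => ?_⟩
  rcases eq_or_ne z 0 with rfl | hz₀
  · exact le_max_right _ _
  · refine le_max_of_le_left ?_
    rcases le_total θ |arg z| with hz | hz
    · exact hC z hz₀ hz
    · exact phragmenLindelof_openSector hθ₀ hθπ hf.diffContOnCl
        ⟨ρ, hρ, B, hO.mono inf_le_left⟩ (fun w hw₀ hw => hC w hw₀ hw.ge) hz₀ hz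

theorem entire_order_half_bounded_on_sector_const_general (hf : Differentiable ℂ f)
    (hθ₀ : 0 < θ) (hθπ : θ ≤ π)
    (hgrowth : ∃ ρ < π / (2 * θ), ∃ B, f =O[cobounded ℂ] fun z => Real.exp (B * ‖z‖ ^ ρ))
    (hsector : ∃ M : ℝ, ∀ z : ℂ, z ≠ 0 → θ ≤ |arg z| → ‖f z‖ ≤ M)
    {c : E} {l : Filter ℂ} [l.NeBot] (hlim : Tendsto f l (𝓝 c)) (z : ℂ) : f z = c := by
  obtain ⟨M, hM⟩ := hsector
  have hbdd := isBounded_range_of_bounded_off_openSector hf hθ₀ hθπ hgrowth hM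
  exact tendsto_nhds_unique
    (tendsto_const_nhds.congr (hf.apply_eq_apply_of_bounded hbdd z)) hlim

end Sector

theorem isBigO_exp_rpow_half_of_norm_le_exp_sqrt {E : Type*} [NormedAddCommGroup E] {f : ℂ → E}
    {A B : ℝ} (hf : ∀ z, ‖f z‖ ≤ A * Real.exp (B * Real.sqrt ‖z‖)) (l : Filter ℂ) :
    f =O[l] fun z => Real.exp (B * ‖z‖ ^ (1 / 2 : ℝ)) :=
  .of_bound A (.of_forall fun z => by
    rw [Real.norm_eq_abs, Real.abs_exp, ← Real.sqrt_eq_rpow]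
    exact hf z)

/-- an entire function of growth order at most 1/2 which is bounded on
the sector {θ ≤ |arg λ| ≤ π} (0 < θ < π) and tends to c along the negative real axis
is identically equal to c. -/
theorem entire_order_half_bounded_on_sector_const
    (f : ℂ → ℂ) (hf : Differentiable ℂ f)
    (A : ℝ) (hA : 0 < A)
    (hgrowth : ∀ z : ℂ, ‖f z‖ ≤ A * Real.exp (A * Real.sqrt ‖z‖))
    (θ : ℝ) (hθ0 : 0 < θ) (hθπ : θ < Real.pi)
    (hsector : ∃ M : ℝ, ∀ z : ℂ, z ≠ 0 → θ ≤ |arg z| → |arg z| ≤ Real.pi → ‖f z‖ ≤ M)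
    (c : ℂ) (hlim : Tendsto (fun t : ℝ => f (t : ℂ)) atBot (nhds c)) :
    ∀ z : ℂ, f z = c := by
  obtain ⟨M, hM⟩ := hsector
  have horder : 1 / 2 < Real.pi / (2 * θ) := by
    rw [lt_div_iff₀ (by positivity)]
    linarith
  exact entire_order_half_bounded_on_sector_const_general hf hθ0 hθπ.le
    ⟨1 / 2, horder, A, isBigO_exp_rpow_half_of_norm_le_exp_sqrt hgrowth _⟩
    ⟨M, fun z hz₀ hz => hM z hz₀ hz (abs_arg_le_pi z)⟩
    (tendsto_map'_iff.2 hlim)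
end
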